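/- (Theorem 5: lower bound on the resource cost of mixtures of projectors) Let φ be a pure state on H_B, and let ρ be a state on H_A of the form ρ = Σ_{x∈S} p_x Π_x/d_x, where S is a finite set, p is a probability distribution on S, and the Π_x are mutually orthogonal orthogonal projections on H_A of ranks d_x ≥ 1. Let ‖·‖_γ be a norm on T_sa(H_A^{⊗n}) for every n ≥ 1 such that ‖X‖_γ ≤ ‖X‖_μ for all X, and whose duals are submultiplicative under tensor products: ‖Y ⊗ Z‖_γ° ≤ ‖Y‖_γ° · ‖Z‖_γ° for all Y, Z on any tensor powers of H_A. Then any achievable dilution rate C > 0 (witnessed by trace-norm- and ‖·‖_μ-contracting maps Λ_n with (1/2)‖Λ_n(φ^{⊗⌈Cn⌉}) − ρ^{⊗n}‖₁ → 0) satisfies C · limsup_{m→∞} (1/m) log₂ ‖φ^{⊗m}‖_μ ≥ Σ_{x∈S} p_x log₂(1/‖Π_x‖_γ°) − H(p), where H(p) := −Σ_{x∈S} p_x log₂ p_x. -/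

import Mathlib

/-!
The argument is a hypothesis test against the typical projection of `ρ^{⊗n}`.

Write `a x = ‖Π_x‖_γ°` and `μ = ∑ p_x log₂ (a_x / p_x)`, so that the left-hand side is `-μ`.
For a set `T` of sequences in `Sⁿ`, the operator `Q = ∑_{s ∈ T} Π_{s₁} ⊗ ⋯ ⊗ Π_{sₙ}` is a
projection with `⟨Q, ρ^{⊗n}⟩ = pⁿ(T)`. Testing an approximation `X` of `ρ^{⊗n}` with it gives
`pⁿ(T) - ‖X - ρ^{⊗n}‖₁ ≤ ⟨Q, X⟩ ≤ ‖Q‖_γ° ‖X‖_γ`, and submultiplicativity yields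
`‖Q‖_γ° ≤ c ∑_{s ∈ T} ∏ a_{s_i}` (`test_bound`).

Take `T` to be the sequences of nonzero probability with `∑ log₂ (a_{s_i} / p_{s_i}) ≤ n (μ + δ)`.
On `T` one has `∏ a_{s_i} ≤ 2 ^ (n (μ + δ)) ∏ p_{s_i}`, so the sum is at most `2 ^ (n (μ + δ))`
(`weight_bound`), without counting typical sequences; and `pⁿ(T) → 1` by a Chernoff bound
(`chernoff`). Hence `‖X‖_γ` is at least of order `2 ^ (-n (μ + δ))` (`eventually_bound`).

For `X = Λ_n (φ^{⊗m})` with `m = ⌈C n⌉`, `‖X‖_γ ≤ ‖φ^{⊗m}‖_μ`. Taking logarithms and dividing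
by `m ≈ C n` bounds the limit superior over `m` from below along the subsequence `⌈C n⌉`.
-/

open scoped ComplexOrder
open Filter

noncomputable section

/-- The real vector space of self-adjoint (Hermitian) operators on `ℂ^ι`. -/
abbrev HMat (ι : Type) [Fintype ι] [DecidableEq ι] : Type :=
  selfAdjoint (Matrix ι ι ℂ)

variable {ι κ : Type} [Fintype ι] [DecidableEq ι] [Fintype κ] [DecidableEq κ]

/-- The matrix underlying a self-adjoint operator is Hermitian. -/
def herm (X : HMat ι) : X.1.IsHermitian := X.2

/-- The (real) Hilbert–Schmidt inner product `⟨Q, X⟩ = Tr (Q X)`. -/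
def hip (Q X : HMat ι) : ℝ := (Matrix.trace (Q.1 * X.1)).re

/-- The trace norm of a self-adjoint operator: the sum of absolute values of eigenvalues. -/
def trNorm (X : HMat ι) : ℝ := ∑ i, |(herm X).eigenvalues i|

/-- The operator norm of a self-adjoint operator: the largest absolute value of an eigenvalue. -/
def opNorm (X : HMat ι) : ℝ := ⨆ i, |(herm X).eigenvalues i|

/-- A state: a positive semidefinite operator of unit trace. -/
def IsState (ρ : HMat ι) : Prop := ρ.1.PosSemidef ∧ Matrix.trace ρ.1 = 1

/-- A pure state: a rank-one orthogonal projection. -/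
def IsPureState (φ : HMat ι) : Prop := IsState φ ∧ φ.1 * φ.1 = φ.1

/-- A norm-like function on self-adjoint operators. -/
structure MatNorm (ι : Type) [Fintype ι] [DecidableEq ι] where
  toFun : HMat ι → ℝ
  eq_zero' : ∀ X, toFun X = 0 → X = 0
  smul' : ∀ (t : ℝ) (X), toFun (t • X) = |t| * toFun X
  add_le' : ∀ X Y, toFun (X + Y) ≤ toFun X + toFun Y

/-- A resource norm: a norm with `‖ρ‖ ≥ 1` on every state. -/
structure ResourceNorm (ι : Type) [Fintype ι] [DecidableEq ι] extends MatNorm ι where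
  one_le_state' : ∀ ρ, IsState ρ → 1 ≤ toFun ρ

/-- The dual norm `‖Q‖° = sup {⟨Q, X⟩ : ‖X‖ ≤ 1}`. -/
def dualNormF (ν : HMat ι → ℝ) (Q : HMat ι) : ℝ :=
  sSup {r | ∃ X, ν X ≤ 1 ∧ r = hip Q X}

/-- Membership in the class `O_μ` of maps contracting the trace norm and the resource norms. -/
def MemO (νi : ResourceNorm ι) (νo : ResourceNorm κ) (Λ : HMat ι →ₗ[ℝ] HMat κ) : Prop :=
  (∀ X, trNorm (Λ X) ≤ trNorm X) ∧ (∀ X, νo.toFun (Λ X) ≤ νi.toFun X)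

/-- The trace-norm ε-ball around a state. -/
def ball (ρ : HMat ι) (ε : ℝ) : Set (HMat ι) :=
  {X | trNorm X ≤ 1 ∧ trNorm (X - ρ) ≤ ε}

/-- Loewner order: `A ≤ B` iff `B - A` is positive semidefinite. -/
def loew (A B : Matrix ι ι ℂ) : Prop := (B - A).PosSemidef

/-- The feasible values `⟨Q, Z⟩` entering the emancipated hypothesis testing quantity. -/
def dhSet (ρ Z : HMat ι) (ε : ℝ) : Set ℝ :=
  {r | ∃ Q : HMat ι, loew (-(1 : Matrix ι ι ℂ)) Q.1 ∧ loew Q.1 1 ∧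
        1 - ε ≤ hip Q ρ ∧ r = hip Q Z}

/-- The non-logarithmic emancipated hypothesis testing quantity `d_ħ^ε(ρ‖Z)`,
with value `+∞` when the infimum is `≤ 0`. -/
def dEmanc (ρ Z : HMat ι) (ε : ℝ) : EReal :=
  if 0 < sInf (dhSet ρ Z ε) then (((sInf (dhSet ρ Z ε))⁻¹ : ℝ) : EReal) else ⊤

/-- The emancipated hypothesis testing relative entropy `D_ħ^ε(ρ‖Z)` (base-2 logarithmic form),
with value `+∞` when the infimum is `≤ 0`. -/
def DEmanc (ρ Z : HMat ι) (ε : ℝ) : EReal :=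
  if 0 < sInf (dhSet ρ Z ε) then ((-Real.logb 2 (sInf (dhSet ρ Z ε)) : ℝ) : EReal) else ⊤


/-- The `n`-fold tensor (Kronecker) power of a self-adjoint operator. -/
def tpow {d : ℕ} (A : HMat (Fin d)) (n : ℕ) : HMat (Fin n → Fin d) :=
  ⟨Matrix.of fun i j => ∏ k, A.1 (i k) (j k), by
    refine Matrix.IsHermitian.isSelfAdjoint ?_
    refine Matrix.IsHermitian.ext fun i j => ?_
    simp only [Matrix.of_apply]
    rw [star_prod]
    exact Finset.prod_congr rfl fun k _ => (herm A).apply (i k) (j k)⟩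

/-- Combining operators on `m` and `n` copies into one on `m + n` copies (tensor product). -/
def kron {d m n : ℕ} (Y : HMat (Fin m → Fin d)) (Z : HMat (Fin n → Fin d)) :
    HMat (Fin (m + n) → Fin d) :=
  ⟨Matrix.of fun i j =>
      Y.1 (fun k => i (Fin.castAdd n k)) (fun k => j (Fin.castAdd n k)) *
        Z.1 (fun k => i (Fin.natAdd m k)) (fun k => j (Fin.natAdd m k)), by
    refine Matrix.IsHermitian.isSelfAdjoint ?_
    refine Matrix.IsHermitian.ext fun i j => ?_
    simp only [Matrix.of_apply, star_mul']
    rw [(herm Y).apply, (herm Z).apply]⟩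

/-! ### Norms on self-adjoint operators and their duals -/

/-- In finite dimension every linear functional is bounded by any norm; here the norm is an
unbundled function, so that no topology on `V` is fixed in advance. -/
lemma exists_linear_bound {V : Type*} [AddCommGroup V] [Module ℝ V] [FiniteDimensional ℝ V]
    (f : V → ℝ) (h0 : ∀ x, f x = 0 → x = 0) (hs : ∀ (t : ℝ) (x), f (t • x) = |t| * f x)
    (hn : ∀ x, 0 ≤ f x) (ha : ∀ x y, f (x + y) ≤ f x + f y) (L : V →ₗ[ℝ] ℝ) :
    ∃ c : ℝ, 0 ≤ c ∧ ∀ x, L x ≤ c * f x := by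
  let _ : Norm V := ⟨f⟩
  have core : NormedSpace.Core ℝ V :=
    { norm_nonneg := hn
      norm_smul := fun t x => by
        change f (t • x) = ‖t‖ * f x
        rw [hs, Real.norm_eq_abs]
      norm_triangle := ha
      norm_eq_zero_iff := fun x => ⟨h0 x, fun h => by
        subst h
        change f 0 = 0
        simpa using hs 0 (0 : V)⟩ }
  let _ : NormedAddCommGroup V := NormedAddCommGroup.ofCore core
  let _ : NormedSpace ℝ V := NormedSpace.ofCore core
  refine ⟨‖LinearMap.toContinuousLinearMap L‖, norm_nonneg _, fun x => ?_⟩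
  exact (le_abs_self _).trans ((LinearMap.toContinuousLinearMap L).le_opNorm x)

lemma MatNorm.map_zero' (ν : MatNorm ι) : ν.toFun 0 = 0 := by
  simpa using ν.smul' 0 0

lemma MatNorm.nonneg' (ν : MatNorm ι) (X : HMat ι) : 0 ≤ ν.toFun X := by
  have h := ν.add_le' X ((-1 : ℝ) • X)
  rw [ν.smul'] at h
  have h2 : X + (-1 : ℝ) • X = 0 := by simp
  rw [h2, ν.map_zero'] at h
  norm_num at h
  linarith

instance : FiniteDimensional ℝ (HMat ι) :=
  FiniteDimensional.of_injective (selfAdjoint.submodule ℝ (Matrix ι ι ℂ)).subtype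
    (Submodule.injective_subtype _)

/-- The functional `X ↦ ⟨Q, X⟩`. -/
def hipLin (Q : HMat ι) : HMat ι →ₗ[ℝ] ℝ where
  toFun X := hip Q X
  map_add' X Y := by simp [hip, mul_add]
  map_smul' t X := by simp [hip]

lemma hip_sub (Q X Y : HMat ι) : hip Q (X - Y) = hip Q X - hip Q Y := (hipLin Q).map_sub X Y

lemma hip_smul (Q : HMat ι) (t : ℝ) (X : HMat ι) : hip Q (t • X) = t * hip Q X :=
  (hipLin Q).map_smul t X

lemma hip_zero (Q : HMat ι) : hip Q 0 = 0 := (hipLin Q).map_zero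

lemma hip_sum_left {α : Type*} (T : Finset α) (Q : α → HMat ι) (X : HMat ι) :
    hip (∑ s ∈ T, Q s) X = ∑ s ∈ T, hip (Q s) X := by
  simp [hip, Finset.sum_mul, Matrix.trace_sum]

/-- The supremum defining the dual norm is over a bounded set, so `dualNormF` is not a junk
value. -/
lemma dual_bddAbove (ν : MatNorm ι) (Q : HMat ι) :
    BddAbove {r | ∃ X, ν.toFun X ≤ 1 ∧ r = hip Q X} := by
  obtain ⟨c, hc, h⟩ := exists_linear_bound ν.toFun ν.eq_zero' ν.smul' ν.nonneg' ν.add_le' (hipLin Q)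
  refine ⟨c, ?_⟩
  rintro r ⟨X, hX, rfl⟩
  exact (h X).trans (mul_le_of_le_one_right hc hX)

lemma dual_nonneg (ν : MatNorm ι) (Q : HMat ι) : 0 ≤ dualNormF ν.toFun Q :=
  le_csSup (dual_bddAbove ν Q) ⟨0, by rw [ν.map_zero']; exact zero_le_one, (hip_zero Q).symm⟩

lemma hip_le_dual (ν : MatNorm ι) (Q X : HMat ι) :
    hip Q X ≤ dualNormF ν.toFun Q * ν.toFun X := by
  rcases (ν.nonneg' X).eq_or_lt with h | h
  · rw [ν.eq_zero' X h.symm, hip_zero, ν.map_zero', mul_zero]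
  · have : hip Q ((ν.toFun X)⁻¹ • X) ≤ dualNormF ν.toFun Q :=
      le_csSup (dual_bddAbove ν Q) ⟨_, by
        rw [ν.smul', abs_of_pos (inv_pos.2 h), inv_mul_cancel₀ h.ne'], rfl⟩
    rw [hip_smul, inv_mul_le_iff₀ h] at this
    linarith

/-! ### Projections against the trace norm -/

lemma idem_diag_mem {α : Type} [Fintype α] {R : Matrix α α ℂ} (hH : R.IsHermitian)
    (hR : R * R = R) (i : α) :
    0 ≤ (R i i).re ∧ (R i i).re ≤ 1 := by
  have h1 : (R i i).re = ∑ j, Complex.normSq (R i j) := by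
    have := congrFun (congrFun hR i) i
    rw [Matrix.mul_apply] at this
    rw [← this, Complex.re_sum]
    refine Finset.sum_congr rfl fun j _ => ?_
    rw [← hH.apply j i, Complex.star_def, Complex.mul_conj]
    simp
  have h2 : (R i i).re * (R i i).re ≤ (R i i).re := by
    calc (R i i).re * (R i i).re ≤ Complex.normSq (R i i) := Complex.re_sq_le_normSq _
      _ ≤ ∑ j, Complex.normSq (R i j) :=
        Finset.single_le_sum (f := fun j => Complex.normSq (R i j))
          (fun j _ => Complex.normSq_nonneg _) (Finset.mem_univ i)
      _ = _ := h1.symm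
  have h0 : 0 ≤ (R i i).re := h1 ▸ Finset.sum_nonneg fun j _ => Complex.normSq_nonneg _
  refine ⟨h0, ?_⟩
  by_contra! h
  nlinarith

/-- In an eigenbasis of `X`, `⟨Q, X⟩` weights the eigenvalues of `X` by the diagonal entries of a
projection, which lie in `[0, 1]`. -/
lemma hip_proj_le_trNorm (Q X : HMat ι) (hQ : Q.1 * Q.1 = Q.1) : |hip Q X| ≤ trNorm X := by
  set U : Matrix ι ι ℂ := ((herm X).eigenvectorUnitary : Matrix ι ι ℂ) with hU
  have hUU : U * star U = 1 := Unitary.coe_mul_star_self (herm X).eigenvectorUnitary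
  set R : Matrix ι ι ℂ := star U * Q.1 * U with hRdef
  have hRR : R * R = R := by
    calc R * R = star U * Q.1 * (U * star U) * Q.1 * U := by simp only [hRdef, mul_assoc]
      _ = star U * (Q.1 * Q.1) * U := by rw [hUU]; simp only [mul_assoc, one_mul]
      _ = R := by rw [hQ]
  have hRH : R.IsHermitian := by
    rw [hRdef, Matrix.star_eq_conjTranspose]
    exact Matrix.isHermitian_conjTranspose_mul_mul U (herm Q)
  have hX : X.1 = U * Matrix.diagonal (RCLike.ofReal ∘ (herm X).eigenvalues) * star U := by
    conv_lhs => rw [(herm X).spectral_theorem]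
    rfl
  have key : hip Q X = ∑ i, (R i i).re * (herm X).eigenvalues i := by
    have : Matrix.trace (Q.1 * X.1)
        = Matrix.trace (R * Matrix.diagonal (RCLike.ofReal ∘ (herm X).eigenvalues)) := by
      conv_lhs => rw [hX]
      rw [← mul_assoc, Matrix.trace_mul_comm, hRdef]
      simp only [mul_assoc]
    rw [hip, this, Matrix.trace, Complex.re_sum]
    refine Finset.sum_congr rfl fun i _ => ?_
    simp [Matrix.mul_diagonal]
  rw [key, trNorm]
  refine (Finset.abs_sum_le_sum_abs _ _).trans (Finset.sum_le_sum fun i _ => ?_)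
  obtain ⟨h0, h1⟩ := idem_diag_mem hRH hRR i
  rw [abs_mul, abs_of_nonneg h0]
  exact mul_le_of_le_one_left (abs_nonneg _) h1

/-! ### Product operators -/

/-- The tensor product `A₀ ⊗ ⋯ ⊗ Aₙ₋₁` of possibly different operators. -/
def tens {d n : ℕ} (A : Fin n → HMat (Fin d)) : HMat (Fin n → Fin d) :=
  ⟨Matrix.of fun i j => ∏ k, (A k).1 (i k) (j k), by
    refine Matrix.IsHermitian.isSelfAdjoint ?_
    refine Matrix.IsHermitian.ext fun i j => ?_
    simp only [Matrix.of_apply]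
    rw [star_prod]
    exact Finset.prod_congr rfl fun k _ => (herm (A k)).apply (i k) (j k)⟩

lemma tpow_eq_tens {d n : ℕ} (A : HMat (Fin d)) : tpow A n = tens fun _ : Fin n => A := rfl

lemma tens_mul_apply {d n : ℕ} (A B : Fin n → HMat (Fin d)) (i j : Fin n → Fin d) :
    ((tens A).1 * (tens B).1) i j = ∏ k, ((A k).1 * (B k).1) (i k) (j k) := by
  simp only [Matrix.mul_apply, tens, Matrix.of_apply, ← Finset.prod_mul_distrib]
  rw [Finset.prod_univ_sum, Fintype.piFinset_univ]

lemma trace_tens_mul {d n : ℕ} (A B : Fin n → HMat (Fin d)) :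
    Matrix.trace ((tens A).1 * (tens B).1) = ∏ k, Matrix.trace ((A k).1 * (B k).1) := by
  simp only [Matrix.trace, Matrix.diag_apply, tens_mul_apply]
  rw [Finset.prod_univ_sum, Fintype.piFinset_univ]

/-- Splitting off the last tensor factor. -/
lemma kron_tens {d n : ℕ} (A : Fin (n + 1) → HMat (Fin d)) :
    kron (tens fun k : Fin n => A k.castSucc) (tpow (A (Fin.last n)) 1) = tens A := by
  refine Subtype.ext (Matrix.ext fun i j => ?_)
  simp only [kron, tens, tpow, Matrix.of_apply, Fin.prod_univ_castSucc (n := n)]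
  simp
  rfl

/-- Iterated submultiplicativity. The constant `c` is the dual norm of the scalar `1` on zero
copies, which need not be `1`. -/
lemma dual_tens_le {d : ℕ} (γ : (n : ℕ) → MatNorm (Fin n → Fin d))
    (hγ : ∀ (m n : ℕ) (Y : HMat (Fin m → Fin d)) (Z : HMat (Fin n → Fin d)),
      dualNormF (γ (m + n)).toFun (kron Y Z) ≤
        dualNormF (γ m).toFun Y * dualNormF (γ n).toFun Z) :
    ∃ c : ℝ, 0 ≤ c ∧ ∀ (n : ℕ) (A : Fin n → HMat (Fin d)),
      dualNormF (γ n).toFun (tens A) ≤ c * ∏ k, dualNormF (γ 1).toFun (tpow (A k) 1) := by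
  refine ⟨dualNormF (γ 0).toFun (tens Fin.elim0), dual_nonneg _ _, fun n => ?_⟩
  induction n with
  | zero =>
    intro A
    rw [Subsingleton.elim A Fin.elim0]
    simp
  | succ n ih =>
    intro A
    rw [← kron_tens A, Fin.prod_univ_castSucc, ← mul_assoc]
    exact (hγ n 1 _ _).trans (mul_le_mul_of_nonneg_right (ih _) (dual_nonneg _ _))

/-! ### A large deviation bound -/

/-- Cramér–Chernoff: a random variable `g` with negative mean has `∑ p exp (t g) < 1` for some
small `t > 0`, so i.i.d. sums of `g` are positive with exponentially small probability. -/
lemma chernoff {S : Type} [Fintype S] (p g : S → ℝ) (hp : ∀ x, 0 ≤ p x)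
    (hp1 : ∑ x, p x = 1) (hg : ∑ x, p x * g x < 0) :
    ∃ c : ℝ, 0 ≤ c ∧ c < 1 ∧ ∀ n : ℕ,
      ∑ s : Fin n → S with 0 < ∑ k, g (s k), ∏ k, p (s k) ≤ c ^ n := by
  obtain ⟨t, ht0, ht1⟩ : ∃ t : ℝ, 0 < t ∧ ∑ x, p x * Real.exp (t * g x) < 1 := by
    have hd : HasDerivAt (fun t : ℝ => ∑ x, p x * Real.exp (t * g x)) (∑ x, p x * g x) 0 := by
      have : ∀ x ∈ (Finset.univ : Finset S),
          HasDerivAt (fun t : ℝ => p x * Real.exp (t * g x)) (p x * g x) 0 := fun x _ => by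
        simpa using (((hasDerivAt_id (0 : ℝ)).mul_const (g x)).exp).const_mul (p x)
      exact HasDerivAt.fun_sum this
    obtain ⟨t, ht, ht0⟩ :=
      ((hd.tendsto_slope_zero_right.eventually_lt_const hg).and self_mem_nhdsWithin).exists
    refine ⟨t, ht0, ?_⟩
    have ht0' : 0 < t := ht0
    simp only [zero_add, zero_mul, Real.exp_zero, mul_one, hp1, smul_eq_mul] at ht
    rw [inv_mul_lt_iff₀ ht0', mul_zero] at ht
    linarith
  refine ⟨_, Finset.sum_nonneg fun x _ => mul_nonneg (hp x) (Real.exp_nonneg _), ht1, fun n => ?_⟩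
  calc ∑ s : Fin n → S with 0 < ∑ k, g (s k), ∏ k, p (s k)
      ≤ ∑ s : Fin n → S with 0 < ∑ k, g (s k), ∏ k, (p (s k) * Real.exp (t * g (s k))) := by
        refine Finset.sum_le_sum fun s hs => ?_
        rw [Finset.prod_mul_distrib, ← Real.exp_sum, ← Finset.mul_sum]
        refine le_mul_of_one_le_right (Finset.prod_nonneg fun k _ => hp _) (Real.one_le_exp ?_)
        exact mul_nonneg ht0.le (Finset.mem_filter.1 hs).2.le
    _ ≤ ∑ s : Fin n → S, ∏ k, (p (s k) * Real.exp (t * g (s k))) :=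
        Finset.sum_le_sum_of_subset_of_nonneg (Finset.filter_subset _ _) fun s _ _ =>
          Finset.prod_nonneg fun k _ => mul_nonneg (hp _) (Real.exp_nonneg _)
    _ = (∑ x, p x * Real.exp (t * g x)) ^ n := by
        rw [Fintype.sum_pow]

/-! ### The typical projection as a test -/

lemma trace_proj_mix {d : ℕ} {S : Type} [Fintype S] (p : S → ℝ) (P : S → HMat (Fin d))
    (hproj : ∀ x, (P x).1 * (P x).1 = (P x).1)
    (horth : ∀ x y, x ≠ y → (P x).1 * (P y).1 = 0)
    (dx : S → ℕ) (hdx : ∀ x, 1 ≤ dx x)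
    (hrank : ∀ x, Matrix.trace (P x).1 = (dx x : ℂ))
    (ρ : HMat (Fin d)) (hmix : ρ = ∑ x, (p x / (dx x : ℝ)) • P x) (x : S) :
    Matrix.trace ((P x).1 * ρ.1) = (p x : ℂ) := by
  have h : (ρ.1 : Matrix (Fin d) (Fin d) ℂ) = ∑ y, (p y / (dx y : ℝ)) • (P y).1 := by
    rw [hmix]
    simp
  have hd : (dx x : ℂ) ≠ 0 := by
    have := hdx x
    exact_mod_cast (by omega : dx x ≠ 0)
  rw [h, Finset.mul_sum, Finset.sum_eq_single x, Matrix.mul_smul, hproj, Matrix.trace_smul, hrank,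
    Complex.real_smul]
  · push_cast
    field_simp
  · intro y _ hy
    rw [Matrix.mul_smul, horth x y hy.symm, smul_zero]
  · simp

lemma tens_mul_tens {d n : ℕ} {S : Type} [DecidableEq S] (P : S → HMat (Fin d))
    (hproj : ∀ x, (P x).1 * (P x).1 = (P x).1)
    (horth : ∀ x y, x ≠ y → (P x).1 * (P y).1 = 0) (s t : Fin n → S) :
    (tens fun k => P (s k)).1 * (tens fun k => P (t k)).1 =
      if s = t then (tens fun k => P (s k)).1 else 0 := by
  ext i j
  rw [tens_mul_apply]
  split_ifs with h
  · subst h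
    simp only [hproj]
    rfl
  · obtain ⟨k, hk⟩ := Function.ne_iff.1 h
    exact Finset.prod_eq_zero (Finset.mem_univ k) (by rw [horth _ _ hk]; rfl)

/-- For any set `T` of sequences, `Q = ∑_{s ∈ T} Π_{s₁} ⊗ ⋯ ⊗ Π_{sₙ}` is a projection with
`⟨Q, ρ^{⊗n}⟩ = pⁿ(T)`. Testing `X` with it gives the lower bound; the upper bound is the
triangle inequality for the dual norm together with its submultiplicativity. -/
lemma test_bound {d : ℕ} (γ : (n : ℕ) → MatNorm (Fin n → Fin d))
    {S : Type} [Fintype S] (p : S → ℝ) (P : S → HMat (Fin d))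
    (hproj : ∀ x, (P x).1 * (P x).1 = (P x).1)
    (horth : ∀ x y, x ≠ y → (P x).1 * (P y).1 = 0)
    (ρ : HMat (Fin d)) (hPρ : ∀ x, Matrix.trace ((P x).1 * ρ.1) = (p x : ℂ))
    (c : ℝ) (hc : ∀ (n : ℕ) (A : Fin n → HMat (Fin d)),
      dualNormF (γ n).toFun (tens A) ≤ c * ∏ k, dualNormF (γ 1).toFun (tpow (A k) 1))
    (n : ℕ) (T : Finset (Fin n → S)) (X : HMat (Fin n → Fin d)) :
    ∑ s ∈ T, ∏ k, p (s k) - trNorm (X - tpow ρ n) ≤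
      (∑ s ∈ T, c * ∏ k, dualNormF (γ 1).toFun (tpow (P (s k)) 1)) * (γ n).toFun X := by
  classical
  set Q : HMat (Fin n → Fin d) := ∑ s ∈ T, tens fun k => P (s k) with hQ
  have hQ1 : Q.1 = ∑ s ∈ T, (tens fun k => P (s k)).1 := by
    rw [hQ]
    simp
  have hQQ : Q.1 * Q.1 = Q.1 := by
    rw [hQ1, Finset.sum_mul_sum]
    refine Finset.sum_congr rfl fun s hs => ?_
    simp only [tens_mul_tens P hproj horth]
    rw [Finset.sum_ite_eq, if_pos hs]
  have hQρ : hip Q (tpow ρ n) = ∑ s ∈ T, ∏ k, p (s k) := by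
    rw [hQ, hip_sum_left]
    refine Finset.sum_congr rfl fun s _ => ?_
    rw [hip, tpow_eq_tens, trace_tens_mul]
    simp only [hPρ]
    rw [← Complex.ofReal_prod, Complex.ofReal_re]
  have h1 := (abs_le.1 (hip_proj_le_trNorm Q (X - tpow ρ n) hQQ)).1
  rw [hip_sub, hQρ] at h1
  have h2 : hip Q X ≤ (∑ s ∈ T, c * ∏ k, dualNormF (γ 1).toFun (tpow (P (s k)) 1)) *
      (γ n).toFun X := by
    rw [hQ, hip_sum_left, Finset.sum_mul]
    exact Finset.sum_le_sum fun s _ => (hip_le_dual (γ n) _ X).trans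
      (mul_le_mul_of_nonneg_right (hc n _) ((γ n).nonneg' X))
  linarith

/-- Sequences of nonzero probability with `∑ log₂ (a/p) ≤ n θ` have total `a`-weight at most
`2 ^ (n θ)`, because `a = p · 2 ^ log₂ (a/p)` and `p` is normalised. -/
lemma weight_bound {S : Type} [Fintype S] (p a : S → ℝ) (hp : ∀ x, 0 ≤ p x)
    (hp1 : ∑ x, p x = 1) (ha : ∀ x, 0 < a x) (θ : ℝ) (n : ℕ) (T : Finset (Fin n → S))
    (hT : ∀ s ∈ T, ∏ k, p (s k) ≠ 0 ∧ ∑ k, (Real.logb 2 (a (s k) / p (s k)) - θ) ≤ 0) :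
    ∑ s ∈ T, ∏ k, a (s k) ≤ (2 : ℝ) ^ (n * θ) := by
  have hpn : ∀ s : Fin n → S, 0 ≤ ∏ k, p (s k) := fun s => Finset.prod_nonneg fun k _ => hp _
  have hle : ∀ s ∈ T, ∏ k, a (s k) ≤ (∏ k, p (s k)) * (2 : ℝ) ^ (n * θ) := by
    intro s hs
    obtain ⟨h0, h1⟩ := hT s hs
    have hpos : ∀ k, 0 < p (s k) := fun k =>
      lt_of_le_of_ne (hp _) (Finset.prod_ne_zero_iff.1 h0 k (Finset.mem_univ k)).symm
    have hfac : ∏ k, a (s k) =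
        (∏ k, p (s k)) * (2 : ℝ) ^ (∑ k, Real.logb 2 (a (s k) / p (s k))) := by
      rw [Real.rpow_sum_of_pos two_pos, ← Finset.prod_mul_distrib]
      refine Finset.prod_congr rfl fun k _ => ?_
      rw [Real.rpow_logb two_pos (by norm_num) (div_pos (ha _) (hpos k)),
        mul_div_cancel₀ _ (hpos k).ne']
    rw [hfac]
    refine mul_le_mul_of_nonneg_left (Real.rpow_le_rpow_of_exponent_le (by norm_num) ?_) (hpn s)
    rw [Finset.sum_sub_distrib] at h1
    simp at h1
    exact h1
  calc ∑ s ∈ T, ∏ k, a (s k) ≤ ∑ s ∈ T, (∏ k, p (s k)) * (2 : ℝ) ^ (n * θ) :=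
        Finset.sum_le_sum hle
    _ = (∑ s ∈ T, ∏ k, p (s k)) * (2 : ℝ) ^ (n * θ) := (Finset.sum_mul _ _ _).symm
    _ ≤ 1 * (2 : ℝ) ^ (n * θ) := by
        refine mul_le_mul_of_nonneg_right ?_ (by positivity)
        calc ∑ s ∈ T, ∏ k, p (s k) ≤ ∑ s : Fin n → S, ∏ k, p (s k) :=
              Finset.sum_le_sum_of_subset_of_nonneg (Finset.subset_univ _) fun s _ _ => hpn s
          _ = 1 := by rw [← Fintype.sum_pow, hp1, one_pow]
    _ = _ := one_mul _

/-- Any sequence approximating `ρ^{⊗n}` has, for large `n`, a `γ`-norm at least of order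
`2 ^ (-n θ)`, for every `θ` above the mean of `log₂ (a/p)`. -/
lemma eventually_bound {d : ℕ} (γ : (n : ℕ) → MatNorm (Fin n → Fin d))
    {S : Type} [Fintype S] (p a : S → ℝ) (hp : ∀ x, 0 ≤ p x)
    (hp1 : ∑ x, p x = 1) (P : S → HMat (Fin d))
    (hproj : ∀ x, (P x).1 * (P x).1 = (P x).1)
    (horth : ∀ x y, x ≠ y → (P x).1 * (P y).1 = 0)
    (ρ : HMat (Fin d)) (hPρ : ∀ x, Matrix.trace ((P x).1 * ρ.1) = (p x : ℂ))
    (c : ℝ) (hc0 : 0 ≤ c) (hc : ∀ (n : ℕ) (A : Fin n → HMat (Fin d)),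
      dualNormF (γ n).toFun (tens A) ≤ c * ∏ k, dualNormF (γ 1).toFun (tpow (A k) 1))
    (ha : ∀ x, a x = dualNormF (γ 1).toFun (tpow (P x) 1)) (hapos : ∀ x, 0 < a x)
    (θ : ℝ) (hθ : ∑ x, p x * Real.logb 2 (a x / p x) < θ)
    (X : (n : ℕ) → HMat (Fin n → Fin d))
    (hX : Tendsto (fun n => trNorm (X n - tpow ρ n)) atTop (nhds 0)) :
    ∀ᶠ n : ℕ in atTop, 1 / 2 ≤ c * (2 : ℝ) ^ (n * θ) * (γ n).toFun (X n) := by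
  classical
  obtain ⟨r, hr0, hr1, hr⟩ := chernoff p (fun x => Real.logb 2 (a x / p x) - θ) hp hp1 (by
    simp only [mul_sub, Finset.sum_sub_distrib, ← Finset.sum_mul, hp1]
    linarith)
  have hlim := (tendsto_pow_atTop_nhds_zero_of_lt_one hr0 hr1).add hX
  rw [add_zero] at hlim
  filter_upwards [hlim.eventually_lt_const (by norm_num : (0 : ℝ) < 1 / 2)] with n hn
  set T : Finset (Fin n → S) := Finset.univ.filter fun s =>
    ∏ k, p (s k) ≠ 0 ∧ ∑ k, (Real.logb 2 (a (s k) / p (s k)) - θ) ≤ 0 with hTdef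
  have htest := test_bound γ p P hproj horth ρ hPρ c hc n T (X n)
  have hmass : 1 - r ^ n ≤ ∑ s ∈ T, ∏ k, p (s k) := by
    have h1 : ∑ s : Fin n → S, ∏ k, p (s k) = 1 := by rw [← Fintype.sum_pow, hp1, one_pow]
    rw [← Finset.sum_filter_add_sum_filter_not Finset.univ
      (fun s : Fin n → S => 0 < ∑ k, (Real.logb 2 (a (s k) / p (s k)) - θ))] at h1
    have h2 : ∑ s : Fin n → S with ¬ 0 < ∑ k, (Real.logb 2 (a (s k) / p (s k)) - θ),
        ∏ k, p (s k) = ∑ s ∈ T, ∏ k, p (s k) := by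
      have : T = (Finset.univ.filter fun s : Fin n → S =>
          ¬ 0 < ∑ k, (Real.logb 2 (a (s k) / p (s k)) - θ)).filter
            fun s => ∏ k, p (s k) ≠ 0 := by
        ext s
        simp only [hTdef, Finset.mem_filter, Finset.mem_univ, true_and, not_lt]
        tauto
      rw [this, Finset.sum_filter_ne_zero]
    have h3 := hr n
    linarith
  have hw := weight_bound p a hp hp1 hapos θ n T fun s hs => (Finset.mem_filter.1 hs).2
  have hfin : (∑ s ∈ T, c * ∏ k, dualNormF (γ 1).toFun (tpow (P (s k)) 1)) * (γ n).toFun (X n) ≤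
      c * (2 : ℝ) ^ (n * θ) * (γ n).toFun (X n) := by
    simp only [← ha]
    rw [← Finset.mul_sum]
    exact mul_le_mul_of_nonneg_right (mul_le_mul_of_nonneg_left hw hc0) ((γ n).nonneg' _)
  linarith

lemma dual_proj_pos {d : ℕ} (ν : MatNorm (Fin 1 → Fin d)) (P : HMat (Fin d))
    (hproj : P.1 * P.1 = P.1) (m : ℕ) (hm : 1 ≤ m) (hrank : Matrix.trace P.1 = (m : ℂ)) :
    0 < dualNormF ν.toFun (tpow P 1) := by
  have h := hip_le_dual ν (tpow P 1) (tpow P 1)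
  have h1 : hip (tpow P 1) (tpow P 1) = m := by
    rw [hip, tpow_eq_tens, trace_tens_mul]
    simp [hproj, hrank]
  rw [h1] at h
  have h2 : (1 : ℝ) ≤ m := by exact_mod_cast hm
  by_contra! hneg
  nlinarith [ν.nonneg' (tpow P 1)]

/-! ### Asymptotics -/

/-- **Theorem 5 (lower bound on the resource cost of mixtures of projectors).**
For `ρ = Σ_x p_x Π_x/d_x` with mutually orthogonal projections `Π_x` of ranks `d_x`,
and a norm `‖·‖_γ ≤ ‖·‖_μ` whose duals are submultiplicative under tensor products,
any achievable dilution rate `C` satisfies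
`C · limsup (1/m) log₂ ‖φ^{⊗m}‖_μ ≥ Σ_x p_x log₂(1/‖Π_x‖_γ°) − H(p)`. -/
theorem cost_of_mixtures
    {dA dB : ℕ}
    (νA : (n : ℕ) → ResourceNorm (Fin n → Fin dA))
    (νB : (n : ℕ) → ResourceNorm (Fin n → Fin dB))
    (γ : (n : ℕ) → MatNorm (Fin n → Fin dA))
    (hγle : ∀ (n : ℕ) (X : HMat (Fin n → Fin dA)), (γ n).toFun X ≤ (νA n).toFun X)
    (hγdualsubmul : ∀ (m n : ℕ) (Y : HMat (Fin m → Fin dA)) (Z : HMat (Fin n → Fin dA)),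
      dualNormF (γ (m + n)).toFun (kron Y Z) ≤
        dualNormF (γ m).toFun Y * dualNormF (γ n).toFun Z)
    (φ : HMat (Fin dB)) (hφ : IsPureState φ)
    {S : Type} [Fintype S]
    (p : S → ℝ) (hp : ∀ x, 0 ≤ p x) (hp1 : (∑ x, p x) = 1)
    (P : S → HMat (Fin dA))
    (hproj : ∀ x, (P x).1 * (P x).1 = (P x).1)
    (horth : ∀ x y, x ≠ y → (P x).1 * (P y).1 = 0)
    (dx : S → ℕ) (hdx : ∀ x, 1 ≤ dx x)
    (hrank : ∀ x, Matrix.trace (P x).1 = (dx x : ℂ))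
    (ρ : HMat (Fin dA)) (hρ : IsState ρ)
    (hmix : ρ = ∑ x, (p x / (dx x : ℝ)) • P x)
    (C : ℝ) (hC : 0 < C)
    (Λ : (n : ℕ) → (HMat (Fin ⌈C * (n : ℝ)⌉₊ → Fin dB) →ₗ[ℝ] HMat (Fin n → Fin dA)))
    (hΛtr : ∀ n X, trNorm ((Λ n) X) ≤ trNorm X)
    (hΛμ : ∀ n X, (νA n).toFun ((Λ n) X) ≤ (νB ⌈C * (n : ℝ)⌉₊).toFun X)
    (hconv : Tendsto
      (fun n : ℕ => (1 / 2) * trNorm ((Λ n) (tpow φ ⌈C * (n : ℝ)⌉₊) - tpow ρ n))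
      atTop (nhds 0)) :
    (((∑ x, p x * Real.logb 2 ((dualNormF (γ 1).toFun (tpow (P x) 1))⁻¹)) -
        (- ∑ x, p x * Real.logb 2 (p x)) : ℝ) : EReal) ≤
      ((C : ℝ) : EReal) *
        Filter.limsup
          (fun m : ℕ => (((m : ℝ)⁻¹ * Real.logb 2 ((νB m).toFun (tpow φ m)) : ℝ) : EReal))
          atTop := by
  obtain ⟨c, hc0, hc⟩ := dual_tens_le γ hγdualsubmul
  set a : S → ℝ := fun x => dualNormF (γ 1).toFun (tpow (P x) 1) with ha
  have hapos : ∀ x, 0 < a x := fun x =>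
    dual_proj_pos (γ 1) (P x) (hproj x) (dx x) (hdx x) (hrank x)
  have hPρ := trace_proj_mix p P hproj horth dx hdx hrank ρ hmix
  set μ : ℝ := ∑ x, p x * Real.logb 2 (a x / p x) with hμ
  have hlhs : (∑ x, p x * Real.logb 2 ((a x)⁻¹)) - (- ∑ x, p x * Real.logb 2 (p x)) = -μ := by
    rw [sub_neg_eq_add, hμ, ← Finset.sum_add_distrib, ← Finset.sum_neg_distrib]
    refine Finset.sum_congr rfl fun x _ => ?_
    rcases eq_or_ne (p x) 0 with h | h
    · simp [h]
    · rw [Real.logb_inv, Real.logb_div (hapos x).ne' h]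
      ring
  have hX : Tendsto (fun n : ℕ => trNorm ((Λ n) (tpow φ ⌈C * (n : ℝ)⌉₊) - tpow ρ n)) atTop
      (nhds 0) := by
    have := hconv.const_mul 2
    simpa [← mul_assoc] using this
  set K : ℕ → ℝ := fun m => (νB m).toFun (tpow φ m) with hK
  have hmtop : Tendsto (fun n : ℕ => ⌈C * (n : ℝ)⌉₊) atTop atTop :=
    tendsto_nat_ceil_atTop.comp (tendsto_natCast_atTop_atTop.const_mul_atTop hC)
  have hlimsup : ((-μ / C : ℝ) : EReal) ≤ Filter.limsup
      (fun m : ℕ => (((m : ℝ)⁻¹ * Real.logb 2 (K m) : ℝ) : EReal)) atTop := by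
    refine EReal.ge_of_forall_gt_iff_ge.1 fun r hr => ?_
    have hr' : r * C < -μ := by
      rw [← lt_div_iff₀ hC]
      exact_mod_cast hr
    -- split the gap `-μ - r C` evenly: one half relaxes the typicality threshold,
    -- the other absorbs the constants and the rounding of `C n`
    set δ : ℝ := (-μ - r * C) / 2 with hδ
    have hδ0 : 0 < δ := by rw [hδ]; linarith
    have hev := eventually_bound γ p a hp hp1 P hproj horth ρ hPρ c hc0 hc (fun _ => rfl) hapos
      (μ + δ) (by linarith) _ hX
    have hlarge : ∀ᶠ n : ℕ in atTop, Real.logb 2 (2 * c) + |r| ≤ δ * n :=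
      (tendsto_natCast_atTop_atTop.const_mul_atTop hδ0).eventually_ge_atTop _
    have hmain : ∀ᶠ n : ℕ in atTop, ((r : ℝ) : EReal) ≤
        (((⌈C * (n : ℝ)⌉₊ : ℝ)⁻¹ * Real.logb 2 (K ⌈C * (n : ℝ)⌉₊) : ℝ) : EReal) := by
      filter_upwards [hev, hlarge, eventually_gt_atTop 0] with n h1 h2 hn
      have hnR : (0 : ℝ) < n := by exact_mod_cast hn
      have hle1 : C * n ≤ (⌈C * (n : ℝ)⌉₊ : ℝ) := Nat.le_ceil _
      have hle2 : (⌈C * (n : ℝ)⌉₊ : ℝ) < C * n + 1 := Nat.ceil_lt_add_one (by positivity)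
      have hKle : (γ n).toFun ((Λ n) (tpow φ ⌈C * (n : ℝ)⌉₊)) ≤ K ⌈C * (n : ℝ)⌉₊ :=
        (hγle n _).trans (hΛμ n _)
      have hpw : (0 : ℝ) < (2 : ℝ) ^ (n * (μ + δ)) := by positivity
      have h3 : 1 / 2 ≤ c * (2 : ℝ) ^ (n * (μ + δ)) * K ⌈C * (n : ℝ)⌉₊ :=
        h1.trans (mul_le_mul_of_nonneg_left hKle (by positivity))
      clear h1 hKle
      generalize (⌈C * (n : ℝ)⌉₊) = m at *
      have hm0 : (0 : ℝ) < m := lt_of_lt_of_le (by positivity) hle1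
      have hcpos : 0 < c := lt_of_le_of_ne hc0 fun h => by
        rw [← h] at h3
        norm_num at h3
      have hKpos : 0 < K m := by
        by_contra! h
        have := mul_nonpos_of_nonneg_of_nonpos (mul_pos hcpos hpw).le h
        linarith
      have h4 : 0 ≤ Real.logb 2 (2 * c * (2 : ℝ) ^ (n * (μ + δ)) * K m) :=
        Real.logb_nonneg (by norm_num) (by linarith)
      rw [Real.logb_mul (by positivity) hKpos.ne', Real.logb_mul (by positivity) hpw.ne',
        Real.logb_rpow two_pos (by norm_num)] at h4
      have hrm : r * m ≤ r * C * n + |r| := by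
        have e : r * (m - C * n) ≤ |r| := by
          calc r * (m - C * n) ≤ |r| * (m - C * n) :=
                mul_le_mul_of_nonneg_right (le_abs_self r) (by linarith)
            _ ≤ |r| * 1 := mul_le_mul_of_nonneg_left (by linarith) (abs_nonneg r)
            _ = |r| := mul_one _
        linarith
      have hμδ : n * (μ + δ) = -(r * C * n) - δ * n := by
        rw [hδ]
        ring
      rw [EReal.coe_le_coe_iff, inv_mul_eq_div, le_div_iff₀ hm0]
      linarith
    exact Filter.le_limsup_of_frequently_le
      (hmtop.frequently (p := fun m : ℕ => ((r : ℝ) : EReal) ≤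
        (((m : ℝ)⁻¹ * Real.logb 2 (K m) : ℝ) : EReal)) hmain.frequently)
  calc _ = (((C : ℝ) * (-μ / C) : ℝ) : EReal) := by
        rw [hlhs, mul_div_cancel₀ _ hC.ne']
    _ = ((C : ℝ) : EReal) * ((-μ / C : ℝ) : EReal) := EReal.coe_mul _ _
    _ ≤ _ := mul_le_mul_of_nonneg_left hlimsup (by exact_mod_cast hC.le)
end
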